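/- For every $\delta>0$ and every $N>0$ there exists a constant $C>0$ (depending only on $\delta$ and $N$) such that for every sequence of occupation numbers $f:\mathbb{N}_{\ge 1}\to[0,1]$ with $\sum_{k\ge 1} f_k \le N$, one has $-\sum_{k\ge 1} f_k\ln f_k \;\le\; C + \delta\sum_{k\ge 1} f_k\,k^{2/3}$, where all sums of nonnegative terms are interpreted in $[0,\infty]$. -/

import Mathlib

/-!
The convex conjugate of `x * log x` is an exponential, so `-x log x ≤ exp (-a) + a x` for all
`x ≥ 0` and real `a`. Taking `x = f k` and `a = δ k ^ (2/3)` and summing over `k` bounds the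
entropy by `δ ∑ f k * k ^ (2/3)` plus `∑ exp (-δ k ^ (2/3))`, which is finite because the
stretched exponential decays faster than `k ^ (-2)`.
-/

open scoped ENNReal

open Asymptotics Filter Real

theorem negMulLog_le_exp_neg_add_mul {x : ℝ} (hx : 0 ≤ x) (a : ℝ) :
    negMulLog x ≤ exp (-a) + a * x := by
  obtain ⟨y, hy, rfl⟩ : ∃ y, 0 ≤ y ∧ y * exp (-a) = x :=
    ⟨x / exp (-a), by positivity, div_mul_cancel₀ x (exp_ne_zero _)⟩
  calc negMulLog (y * exp (-a))
      = exp (-a) * negMulLog y + a * (y * exp (-a)) := by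
        rw [negMulLog_mul, negMulLog.eq_def (exp (-a)), log_exp]; ring
    _ ≤ exp (-a) * (1 - y) + a * (y * exp (-a)) := by
        gcongr
        exact negMulLog_le_one_sub_self hy
    _ ≤ exp (-a) * 1 + a * (y * exp (-a)) := by
        gcongr
        exact sub_le_self 1 hy
    _ = exp (-a) + a * (y * exp (-a)) := by rw [mul_one]

theorem tsum_ofReal_negMulLog_le {ι : Type*} {f : ι → ℝ} (hf : ∀ i, 0 ≤ f i) (w : ι → ℝ) :
    ∑' i, ENNReal.ofReal (negMulLog (f i)) ≤
      ∑' i, ENNReal.ofReal (exp (-w i)) + ∑' i, ENNReal.ofReal (w i * f i) := by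
  rw [← ENNReal.tsum_add]
  refine ENNReal.tsum_le_tsum fun i ↦ ?_
  calc ENNReal.ofReal (negMulLog (f i))
      ≤ ENNReal.ofReal (exp (-w i) + w i * f i) :=
        ENNReal.ofReal_le_ofReal (negMulLog_le_exp_neg_add_mul (hf i) (w i))
    _ ≤ ENNReal.ofReal (exp (-w i)) + ENNReal.ofReal (w i * f i) := ENNReal.ofReal_add_le

theorem summable_exp_neg_mul_rpow {δ s : ℝ} (hδ : 0 < δ) (hs : 0 < s) :
    Summable fun k : ℕ ↦ exp (-(δ * (k : ℝ) ^ s)) := by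
  have h_decay : (fun x : ℝ ↦ exp (-(δ * x ^ s))) =o[atTop] fun x ↦ (x ^ s) ^ (-2 / s) := by
    simpa only [Function.comp_def, neg_mul] using
      (isLittleO_exp_neg_mul_rpow_atTop hδ (-2 / s)).comp_tendsto (tendsto_rpow_atTop hs)
  have h_pow (k : ℕ) : ((k : ℝ) ^ s) ^ (-2 / s) = (k : ℝ) ^ (-2 : ℝ) := by
    rw [← rpow_mul k.cast_nonneg, mul_div_cancel₀ _ hs.ne']
  refine summable_of_isBigO_nat (summable_nat_rpow.2 (by norm_num : (-2 : ℝ) < -1)) ?_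
  simpa only [Function.comp_def, h_pow] using
    (h_decay.comp_tendsto tendsto_natCast_atTop_atTop).isBigO

theorem stmt1_general {δ s : ℝ} (hδ : 0 < δ) (hs : 0 < s) :
    ∃ C : ℝ, 0 < C ∧
      ∀ f : ℕ → ℝ, (∀ k, 0 ≤ f k) →
        (∑' k : ℕ, ENNReal.ofReal (-(f k * Real.log (f k)))) ≤
          ENNReal.ofReal C +
            ENNReal.ofReal δ * ∑' k : ℕ, ENNReal.ofReal (f k * ((k + 1 : ℕ) : ℝ) ^ s) := by
  let w (k : ℕ) : ℝ := δ * ((k + 1 : ℕ) : ℝ) ^ s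
  have h_summable : Summable fun k ↦ exp (-w k) :=
    (summable_nat_add_iff 1).2 (summable_exp_neg_mul_rpow hδ hs)
  refine ⟨∑' k, exp (-w k), h_summable.tsum_pos (fun k ↦ (exp_pos _).le) 0 (exp_pos _),
    fun f hf ↦ ?_⟩
  have h_weight (k : ℕ) : ENNReal.ofReal (w k * f k) =
      ENNReal.ofReal δ * ENNReal.ofReal (f k * ((k + 1 : ℕ) : ℝ) ^ s) := by
    rw [← ENNReal.ofReal_mul hδ.le, mul_assoc, mul_comm (f k)]
  simpa only [negMulLog_eq_neg, h_weight, ENNReal.tsum_mul_left,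
    ← ENNReal.ofReal_tsum_of_nonneg (fun k ↦ (exp_pos (-w k)).le) h_summable]
    using tsum_ofReal_negMulLog_le hf w

/-- For every `δ > 0` and `N > 0` there is `C > 0` such that for every sequence of
occupation numbers `f : ℕ≥1 → [0,1]` (indexed here by `k : ℕ` via `k+1`) with
`∑_{k≥1} f k ≤ N`, one has `-∑_{k≥1} f k * ln (f k) ≤ C + δ * ∑_{k≥1} f k * k^(2/3)`,
all sums of nonnegative terms being interpreted in `[0,∞]`. -/
theorem stmt1 (δ N : ℝ) (hδ : 0 < δ) (hN : 0 < N) :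
    ∃ C : ℝ, 0 < C ∧
      ∀ f : ℕ → ℝ, (∀ k, 0 ≤ f k) → (∀ k, f k ≤ 1) →
        (∑' k : ℕ, ENNReal.ofReal (f k)) ≤ ENNReal.ofReal N →
        (∑' k : ℕ, ENNReal.ofReal (-(f k * Real.log (f k)))) ≤
          ENNReal.ofReal C +
            ENNReal.ofReal δ *
              ∑' k : ℕ, ENNReal.ofReal (f k * ((k + 1 : ℕ) : ℝ) ^ (2 / 3 : ℝ)) := by
  obtain ⟨C, hC, h_bound⟩ := stmt1_general hδ (s := 2 / 3) (by norm_num)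
  exact ⟨C, hC, fun f hf _ _ ↦ h_bound f hf⟩
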